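/- Let f(x,y) = (1/5)·x·y − cos(y) on X × Y = [−1,1] × [−2π,2π], and define g(x) = max_{y∈[−2π,2π]} f(x,y). Then: (i) g(0) = 1 and the set of maximizers of y ↦ f(0,y) over [−2π,2π] is exactly {−π, π}; (ii) g(x) ≥ 1 + (π/5)|x| for every x ∈ [−1,1]; hence (iii) x = 0 is the unique global minimizer of g over [−1,1], so the min-max problem min_{x∈[−1,1]} max_{y∈[−2π,2π]} f(x,y) has exactly the two global solutions (0, −π) and (0, π). -/

import Mathlib

/-!
The lower bound `1 + (π/5)|x| ≤ g x` comes from testing the maximum at `y = π` (for `x ≥ 0`) and at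
`y = -π` (for `x ≤ 0`), where `-cos y = 1`. At `x = 0` the objective is `-cos y ≤ 1`, so `g 0 = 1`,
and it is attained exactly where `cos y = -1`; by `cos_eq_neg_one_iff_of_mem_Icc` this means
`y = ±π`. As `π > 0`, the lower bound exceeds `1` for `x ≠ 0`, so every global solution has `x = 0`.
-/

open Real

theorem cos_eq_neg_one_iff_of_mem_Icc {y : ℝ} (hy : y ∈ Set.Icc (-(2 * π)) (2 * π)) :
    Real.cos y = -1 ↔ y = -π ∨ y = π := by
  constructor
  · intro h
    have hpi := Real.pi_pos
    obtain ⟨k, hk⟩ := Real.cos_eq_neg_one_iff.mp h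
    obtain ⟨h1, h2⟩ := hy
    -- `y = (2k + 1)π` with `|y| ≤ 2π` leaves only `k = -1` and `k = 0`.
    have hk1 : (-2 : ℝ) < k := by nlinarith
    have hk2 : (k : ℝ) < 1 := by nlinarith
    have hk1' : -2 < k := by exact_mod_cast hk1
    have hk2' : k < 1 := by exact_mod_cast hk2
    obtain rfl | rfl : k = -1 ∨ k = 0 := by omega
    · left
      push_cast at hk
      linarith
    · right
      push_cast at hk
      linarith
  · rintro (rfl | rfl) <;> simp

/-- Example (Jin et al.): for `f(x,y) = (1/5) x y - cos y` on `[-1,1] × [-2π, 2π]` and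
`g(x) = max_{y ∈ [-2π,2π]} f(x,y)`: (i) `g 0 = 1` and the maximizers of `f(0, ·)` are
exactly `{-π, π}`; (ii) `g x ≥ 1 + (π/5) |x|`; hence (iii) `x = 0` is the unique global
minimizer of `g` on `[-1,1]` and the min-max problem has exactly the two global solutions
`(0, -π)` and `(0, π)`. -/
theorem jin_example (g : ℝ → ℝ)
    (hg : ∀ x ∈ Set.Icc (-1 : ℝ) 1,
      IsGreatest ((fun y => (1 / 5) * x * y - Real.cos y) ''
        Set.Icc (-(2 * π)) (2 * π)) (g x)) :
    g 0 = 1 ∧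
    {y ∈ Set.Icc (-(2 * π)) (2 * π) | (1 / 5) * 0 * y - Real.cos y = g 0} =
      ({-π, π} : Set ℝ) ∧
    (∀ x ∈ Set.Icc (-1 : ℝ) 1, 1 + (π / 5) * |x| ≤ g x) ∧
    (∀ x ∈ Set.Icc (-1 : ℝ) 1, x ≠ 0 → g 0 < g x) ∧
    {p : ℝ × ℝ | p.1 ∈ Set.Icc (-1 : ℝ) 1 ∧ p.2 ∈ Set.Icc (-(2 * π)) (2 * π) ∧
        (∀ x ∈ Set.Icc (-1 : ℝ) 1, g p.1 ≤ g x) ∧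
        (1 / 5) * p.1 * p.2 - Real.cos p.2 = g p.1} =
      ({(0, -π), (0, π)} : Set (ℝ × ℝ)) := by
  have hpi := Real.pi_pos
  have mem0 : (0 : ℝ) ∈ Set.Icc (-1 : ℝ) 1 := by constructor <;> norm_num
  have memp : π ∈ Set.Icc (-(2 * π)) (2 * π) := by constructor <;> linarith
  have memn : -π ∈ Set.Icc (-(2 * π)) (2 * π) := by constructor <;> linarith
  have lower : ∀ x ∈ Set.Icc (-1 : ℝ) 1, 1 + (π / 5) * |x| ≤ g x := by
    intro x hx
    have h1 := (hg x hx).2 (Set.mem_image_of_mem _ memp)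
    have h2 := (hg x hx).2 (Set.mem_image_of_mem _ memn)
    simp only [Real.cos_neg, Real.cos_pi] at h1 h2
    rcases abs_cases x with ⟨h, _⟩ | ⟨h, _⟩ <;> rw [h] <;> linarith
  have g0 : g 0 = 1 := by
    apply le_antisymm
    · obtain ⟨y, _, hy⟩ := (hg 0 mem0).1
      have := Real.neg_one_le_cos y
      simp only at hy
      linarith
    · simpa using lower 0 mem0
  have strict : ∀ x ∈ Set.Icc (-1 : ℝ) 1, x ≠ 0 → g 0 < g x := by
    intro x hx hne
    have h1 := lower x hx
    have h2 : 0 < π / 5 * |x| := by positivity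
    linarith
  have maxi : ∀ y ∈ Set.Icc (-(2 * π)) (2 * π),
      ((1 / 5) * 0 * y - Real.cos y = g 0 ↔ y = -π ∨ y = π) := by
    intro y hy
    rw [← cos_eq_neg_one_iff_of_mem_Icc hy, g0]
    constructor <;> intro h <;> linarith
  refine ⟨g0, ?_, lower, strict, ?_⟩
  · ext y
    simp only [Set.mem_ofPred_eq, Set.mem_insert_iff, Set.mem_singleton_iff]
    constructor
    · rintro ⟨hy, h⟩
      exact (maxi y hy).mp h
    · intro h
      have hy : y ∈ Set.Icc (-(2 * π)) (2 * π) := by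
        rcases h with rfl | rfl <;> assumption
      exact ⟨hy, (maxi y hy).mpr h⟩
  · ext ⟨x, y⟩
    simp only [Set.mem_ofPred_eq, Set.mem_insert_iff, Set.mem_singleton_iff, Prod.mk.injEq]
    constructor
    · rintro ⟨hx, hy, hmin, h⟩
      have hx0 : x = 0 := by
        by_contra hne
        exact absurd (strict x hx hne) (not_lt.mpr (hmin 0 mem0))
      subst hx0
      exact ((maxi y hy).mp h).imp (⟨rfl, ·⟩) (⟨rfl, ·⟩)
    · intro h
      have hx0 : x = 0 := by tauto
      have hyp : y = -π ∨ y = π := by tauto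
      subst hx0
      have hy : y ∈ Set.Icc (-(2 * π)) (2 * π) := by
        rcases hyp with rfl | rfl <;> assumption
      refine ⟨mem0, hy, fun x hx => ?_, (maxi y hy).mpr hyp⟩
      rcases eq_or_ne x 0 with rfl | hne
      · exact le_rfl
      · exact (strict x hx hne).le
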